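/- Let ε > 0 and let f = id ∗ g be the Dirichlet convolution of the identity with an arithmetic function g satisfying g(n) = O_ε(n^ε) for all n ≥ 1. Then ∑_{n ≤ x} f(⌊x/n⌋)/⌊x/n⌋ = x · ∑_{m ≥ 1} f(m)/(m²(m+1)) + O(x^{1/3 + ε}) as x → ∞. -/

import Mathlib

open Filter Finset

/-!
Since `f m / m = ∑ d ∣ m, g d / d`, the sum in question weights each `g d / d` by the number of
`n ≤ x` with `d ∣ ⌊x / n⌋`. With `α = 1 / d` and `y = x / d` this number is
`∑ n, (⌊y / n⌋ - ⌊y / n - α⌋)`, which counts the lattice points with `n * l ≤ y < n * (l + α)`.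
Dirichlet's hyperbola method turns it into `y * ∑ l, (1 / l - 1 / (l + α))` plus sums of the
sawtooth function over `y / (n + α) - β` with `n ≤ √y`. Voronoi's argument bounds these by
`O(y ^ θ)` for every `θ > 1 / 3`: one approximates the slope `y / n ^ 2` by rationals `a / b`, on a
block of about `b` consecutive `n` the function runs almost evenly through the residues modulo `b`,
and the blocks are counted according to their denominators. Finally the error
`∑ d, ‖g d‖ / d * (x / d) ^ θ` is `O(x ^ θ)`, because `g d = O(d ^ η)` with `η < θ`.
-/

/-- The sawtooth function `1/2 - {w}`, written `-ψ(w)` in the literature on lattice points. The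
sign is chosen so that `⌊w⌋ = w - 1/2 + sawtooth w`. -/
noncomputable def sawtooth (w : ℝ) : ℝ := 1 / 2 - Int.fract w

lemma abs_sawtooth_le_one (w : ℝ) : |sawtooth w| ≤ 1 := by
  rw [sawtooth, abs_le]
  constructor <;> linarith [Int.fract_nonneg w, Int.fract_lt_one w]

lemma natCast_floor_eq_add_sawtooth {w : ℝ} (hw : 0 ≤ w) :
    (⌊w⌋₊ : ℝ) = w - 1 / 2 + sawtooth w := by
  rw [natCast_floor_eq_intCast_floor hw, sawtooth, ← Int.self_sub_floor]
  ring

lemma sawtooth_le_add_sub {w z : ℝ} (h : w ≤ z) : sawtooth w ≤ sawtooth z + (z - w) := by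
  have hfloor : (⌊w⌋ : ℝ) ≤ ⌊z⌋ := by exact_mod_cast Int.floor_le_floor h
  rw [sawtooth, sawtooth, ← Int.self_sub_floor, ← Int.self_sub_floor]
  linarith

lemma sum_range_emod_of_isCoprime {M : Type*} [AddCommMonoid M] {q : ℕ} {a : ℤ}
    (h : IsCoprime a q) (b : ℤ) (F : ℤ → M) :
    ∑ u ∈ range q, F ((b + a * u) % q) = ∑ r ∈ range q, F r := by
  rcases q.eq_zero_or_pos with rfl | hq
  · simp
  have hnonneg (u : ℕ) : 0 ≤ (b + a * u) % (q : ℤ) := Int.emod_nonneg _ (by omega)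
  have hmaps : Set.MapsTo (fun u : ℕ => ((b + a * u) % (q : ℤ)).toNat) (range q) (range q) := by
    intro u _
    have := Int.emod_lt_of_pos (b + a * u) (Int.natCast_pos.2 hq)
    simp only [coe_range, Set.mem_Iio]
    omega
  have hinj : Set.InjOn (fun u : ℕ => ((b + a * u) % (q : ℤ)).toNat) (range q) := by
    intro u hu v hv huv
    simp only [coe_range, Set.mem_Iio] at hu hv
    have hmod : b + a * u ≡ b + a * v [ZMOD q] := by
      have := hnonneg u
      have := hnonneg v
      change _ % _ = _ % _
      dsimp only at huv
      omega
    have hdvd : (q : ℤ) ∣ v - u :=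
      h.symm.dvd_of_dvd_mul_left (by simpa [mul_sub] using hmod.dvd)
    have := Int.eq_zero_of_abs_lt_dvd hdvd (by rw [abs_lt]; constructor <;> omega)
    omega
  refine sum_nbij _ hmaps hinj (surjOn_of_injOn_of_card_le _ hmaps hinj le_rfl) fun u _ => ?_
  rw [Int.toNat_of_nonneg (hnonneg u)]

lemma sum_range_sawtooth_of_isCoprime {q : ℕ} (hq : 0 < q) {a : ℤ} (h : IsCoprime a q) (b : ℤ) :
    ∑ u ∈ range q, sawtooth ((b + a * u) / q) = 1 / 2 := by
  have hterm (u : ℕ) : sawtooth ((b + a * u) / q) =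
      1 / 2 - (((b + a * u) % (q : ℤ) : ℤ) : ℝ) / q := by
    rw [sawtooth, ← Int.fract_div_intCast_eq_div_intCast_mod]
    push_cast
    rfl
  have hgauss : (∑ r ∈ range q, (r : ℝ)) * 2 = q * (q - 1) := by
    have := congrArg (Nat.cast (R := ℝ)) (sum_range_id_mul_two q)
    push_cast [Nat.cast_pred hq] at this
    exact this
  simp_rw [hterm]
  rw [sum_range_emod_of_isCoprime h b fun r => 1 / 2 - (r : ℝ) / q]
  simp only [sum_sub_distrib, sum_const, card_range, nsmul_eq_mul, Int.cast_natCast, ← sum_div]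
  field_simp
  linarith

lemma abs_sum_range_sawtooth_le {q : ℕ} (hq : 0 < q) {a : ℤ} (h : IsCoprime a q) (c : ℝ) (K : ℕ)
    {w : ℕ → ℝ} (hw : ∀ u < q, |w u - (c + a * u / q)| ≤ K / q) :
    |∑ u ∈ range q, sawtooth (w u)| ≤ 2 * K + 2 := by
  set b : ℤ := ⌊q * c⌋
  have hb : (b : ℝ) ≤ q * c := Int.floor_le _
  have hb' : q * c < b + 1 := Int.lt_floor_add_one _
  have hlower : ∀ u < q, (((b - K : ℤ) : ℝ) + a * u) / q ≤ w u := by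
    intro u hu
    calc (((b - K : ℤ) : ℝ) + a * u) / q ≤ (q * c - K + a * u) / q := by
          push_cast
          gcongr
      _ = c + a * u / q - K / q := by field_simp; ring
      _ ≤ w u := by linarith [(abs_le.1 (hw u hu)).1]
  have hupper : ∀ u < q, w u ≤ (((b + 1 + K : ℤ) : ℝ) + a * u) / q := by
    intro u hu
    calc w u ≤ c + a * u / q + K / q := by linarith [(abs_le.1 (hw u hu)).2]
      _ = (q * c + K + a * u) / q := by field_simp; ring
      _ ≤ (((b + 1 + K : ℤ) : ℝ) + a * u) / q := by
          push_cast
          gcongr ?_ / _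
          linarith
  have hwidth (u : ℕ) : (((b + 1 + K : ℤ) : ℝ) + a * u) / q - (((b - K : ℤ) : ℝ) + a * u) / q =
      (2 * K + 1) / q := by
    push_cast
    ring
  have hsum_width : ∑ _u ∈ range q, (2 * K + 1 : ℝ) / q = 2 * K + 1 := by
    simp only [sum_const, card_range, nsmul_eq_mul]
    field_simp
  rw [abs_le]
  constructor
  · have := sum_le_sum fun u hu => (sawtooth_le_add_sub (hlower u (mem_range.1 hu))).trans
      (add_le_add_right ((sub_le_sub_right (hupper u (mem_range.1 hu)) _).trans_eq (hwidth u)) _)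
    rw [sum_range_sawtooth_of_isCoprime hq h, sum_add_distrib, hsum_width] at this
    linarith
  · have := sum_le_sum fun u hu => (sawtooth_le_add_sub (hupper u (mem_range.1 hu))).trans
      (add_le_add_right ((sub_le_sub_left (hlower u (mem_range.1 hu)) _).trans_eq (hwidth u)) _)
    rw [sum_add_distrib, sum_range_sawtooth_of_isCoprime hq h, hsum_width] at this
    linarith

lemma card_le_of_gaps {ι : Type*} [LinearOrder ι] (B : Finset ι) (φ : ι → ℝ) {δ R : ℝ}
    (hδ : 0 < δ) (hR : 0 ≤ R) (hgap : ∀ s ∈ B, ∀ t ∈ B, s < t → δ ≤ φ t - φ s)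
    (hdiam : ∀ s ∈ B, ∀ t ∈ B, s < t → φ t - φ s ≤ R) : (#B : ℝ) ≤ R / δ + 1 := by
  rcases B.eq_empty_or_nonempty with rfl | hB
  · rw [card_empty, Nat.cast_zero]
    positivity
  set m := B.min' hB
  have hm : m ∈ B := B.min'_mem hB
  have hmin : ∀ s ∈ B, s = m ∨ m < s := fun s hs => (B.min'_le s hs).eq_or_lt'
  have hnonneg : ∀ s ∈ B, 0 ≤ (φ s - φ m) / δ := by
    intro s hs
    rcases hmin s hs with rfl | h
    · simp
    · exact div_nonneg (hδ.le.trans (hgap m hm s hs h)) hδ.le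
  have hmono : StrictMonoOn (fun s => ⌊(φ s - φ m) / δ⌋₊) (B : Set ι) := by
    intro s hs t ht hst
    have hstep : (φ s - φ m) / δ + 1 ≤ (φ t - φ m) / δ := by
      rw [div_add_one hδ.ne']
      gcongr
      linarith [hgap s hs t ht hst]
    calc ⌊(φ s - φ m) / δ⌋₊ < ⌊(φ s - φ m) / δ + 1⌋₊ := by
          rw [Nat.floor_add_one (hnonneg s hs)]
          exact Nat.lt_succ_self _
      _ ≤ ⌊(φ t - φ m) / δ⌋₊ := Nat.floor_le_floor hstep
  have hmaps : ∀ s ∈ B, ⌊(φ s - φ m) / δ⌋₊ ∈ range (⌊R / δ⌋₊ + 1) := by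
    intro s hs
    rw [mem_range, Nat.lt_succ_iff]
    gcongr
    rcases hmin s hs with rfl | h
    · simpa using hR
    · exact hdiam m hm s hs h
  have hcard := card_le_card_of_injOn _ hmaps hmono.injOn
  rw [card_range] at hcard
  calc (#B : ℝ) ≤ ⌊R / δ⌋₊ + 1 := by exact_mod_cast hcard
    _ ≤ R / δ + 1 := by
        gcongr
        exact Nat.floor_le (by positivity)

lemma exists_greedy_blocks {φ : ℕ → ℝ} (hφ : ∀ n, |φ n| ≤ 1) {p : ℕ → ℕ} {T M : ℕ} {K : ℝ}
    (hp : ∀ s, 0 < p s) (hpT : ∀ s, p s ≤ T) (t : ℕ)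
    (hblock : ∀ s, t ≤ s → s + p s ≤ M → |∑ u ∈ range (p s), φ (s + u)| ≤ K) :
    ∃ B : Finset ℕ, (∀ s ∈ B, t ≤ s ∧ s < M) ∧ (∀ s ∈ B, ∀ s' ∈ B, s < s' → s + p s ≤ s') ∧
      |∑ n ∈ Ico t M, φ n| ≤ K * #B + T := by
  induction hk : M - t using Nat.strong_induction_on generalizing t with
  | _ k ih =>
    have hpt := hp t
    rcases lt_or_ge M (t + p t) with hM | hM
    · refine ⟨∅, by simp, by simp, ?_⟩
      calc |∑ n ∈ Ico t M, φ n| ≤ #(Ico t M) • (1 : ℝ) :=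
            (abs_sum_le_sum_abs _ _).trans (sum_le_card_nsmul _ _ _ fun n _ => hφ n)
        _ = (M - t : ℕ) := by simp
        _ ≤ K * #(∅ : Finset ℕ) + T := by
            have : M - t ≤ T := by have := hpT t; omega
            simpa using this
    · obtain ⟨B, hB, hgap, hsum⟩ := ih (M - (t + p t)) (by omega) (t + p t)
        (fun s hs => hblock s (by omega)) rfl
      refine ⟨insert t B, ?_, ?_, ?_⟩
      · intro s hs
        rcases mem_insert.1 hs with rfl | hs
        · omega
        · have := hB s hs
          omega
      · intro s hs s' hs' hlt
        rcases mem_insert.1 hs with rfl | hsB <;> rcases mem_insert.1 hs' with rfl | hsB'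
        · omega
        · exact (hB s' hsB').1
        · have := hB s hsB
          omega
        · exact hgap s hsB s' hsB' hlt
      · have htB : t ∉ B := fun h => by
          have := hB t h
          omega
        rw [card_insert_of_notMem htB, ← sum_Ico_consecutive φ (Nat.le_add_right t (p t)) hM,
          sum_Ico_eq_sum_range, Nat.add_sub_cancel_left]
        push_cast
        linarith [hblock t le_rfl hM, abs_add_le (∑ u ∈ range (p t), φ (t + u))
          (∑ n ∈ Ico (t + p t) M, φ n)]

section Slopes

variable {v : ℕ → ℝ} {r : ℕ → ℚ} {B : Finset ℕ} {T q : ℕ} {c D : ℝ}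

lemma card_filter_eq_rat_le (hc : 0 ≤ c) {ρ : ℚ} (hρ : ρ.den ≤ T)
    (hr : ∀ s ∈ B, |v s - r s| ≤ 1 / ((T + 1) * (r s).den))
    (hgap : ∀ s ∈ B, ∀ t ∈ B, s < t → s + (r s).den ≤ t)
    (hv : ∀ s ∈ B, ∀ t ∈ B, s < t → (t : ℝ) - s ≤ c * T ^ 3 * |v s - v t|) :
    (#{s ∈ B | r s = ρ} : ℝ) ≤ (2 * c + 1) * T ^ 2 / ρ.den ^ 2 := by
  have hq : (0 : ℝ) < ρ.den := by exact_mod_cast ρ.pos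
  have hqT : (ρ.den : ℝ) ≤ T := by exact_mod_cast hρ
  have hT : (0 : ℝ) < T := hq.trans_le hqT
  have hdiam : ∀ s ∈ B, ∀ t ∈ B, r s = ρ → r t = ρ → s < t →
      (t : ℝ) - s ≤ 2 * c * T ^ 2 / ρ.den := by
    intro s hs t ht hsρ htρ hst
    have hslopes : |v s - v t| ≤ 2 / (T * ρ.den) := by
      calc |v s - v t| ≤ |v s - r s| + |r s - v t| := abs_sub_le _ _ _
        _ = |v s - r s| + |v t - r t| := by rw [hsρ, htρ, abs_sub_comm (ρ : ℝ)]
        _ ≤ 1 / ((T + 1) * ρ.den) + 1 / ((T + 1) * ρ.den) := by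
            have hrs := hr s hs
            have hrt := hr t ht
            rw [hsρ] at hrs ⊢
            rw [htρ] at hrt ⊢
            exact add_le_add hrs hrt
        _ = 2 / ((T + 1) * ρ.den) := by ring
        _ ≤ 2 / (T * ρ.den) := by
            gcongr
            linarith
    calc (t : ℝ) - s ≤ c * T ^ 3 * |v s - v t| := hv s hs t ht hst
      _ ≤ c * T ^ 3 * (2 / (T * ρ.den)) := by gcongr
      _ = 2 * c * T ^ 2 / ρ.den := by field_simp
  calc (#{s ∈ B | r s = ρ} : ℝ) ≤ 2 * c * T ^ 2 / ρ.den / ρ.den + 1 := by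
        refine card_le_of_gaps _ (fun s : ℕ => (s : ℝ)) hq (by positivity) ?_ ?_
        · intro s hs t ht hst
          rw [mem_filter] at hs ht
          have := hgap s hs.1 t ht.1 hst
          rw [hs.2] at this
          rw [le_sub_iff_add_le']
          exact_mod_cast this
        · intro s hs t ht hst
          rw [mem_filter] at hs ht
          exact hdiam s hs.1 t ht.1 hs.2 ht.2 hst
    _ ≤ 2 * c * T ^ 2 / ρ.den / ρ.den + T ^ 2 / ρ.den ^ 2 := by
        gcongr
        rw [one_le_div (by positivity)]
        gcongr
    _ = (2 * c + 1) * T ^ 2 / ρ.den ^ 2 := by ring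

lemma one_div_le_sub_of_den_eq {ρ σ : ℚ} (hρ : ρ.den = q) (hσ : σ.den = q) (h : ρ < σ) :
    (1 : ℝ) / q ≤ σ - ρ := by
  have hq : (0 : ℝ) < q := by exact_mod_cast hρ ▸ ρ.pos
  have hnum : ρ.num + 1 ≤ σ.num := by
    rw [Rat.lt_iff, hρ, hσ] at h
    exact lt_of_mul_lt_mul_right h (by positivity)
  have hnum' : (ρ.num : ℝ) + 1 ≤ σ.num := by exact_mod_cast hnum
  rw [Rat.cast_def ρ, Rat.cast_def σ, hρ, hσ, ← sub_div]
  gcongr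
  linarith

lemma card_image_filter_den_eq_le (hq : 0 < q) (hD₀ : 0 ≤ D)
    (hr : ∀ s ∈ B, |v s - r s| ≤ 1 / ((T + 1) * (r s).den))
    (hD : ∀ s ∈ B, ∀ t ∈ B, |v s - v t| ≤ D) (hT : 0 < T) :
    (#(image r {s ∈ B | (r s).den = q}) : ℝ) ≤ (D + 2) * q := by
  have hq' : (1 : ℝ) ≤ q := by exact_mod_cast hq
  have hT' : (1 : ℝ) ≤ T := by exact_mod_cast hT
  calc (#(image r {s ∈ B | (r s).den = q}) : ℝ) ≤ (D + 1 / q) / (1 / q) + 1 := by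
        refine card_le_of_gaps _ (fun ρ : ℚ => (ρ : ℝ)) (by positivity) (by positivity) ?_ ?_
        · simp only [mem_image, mem_filter]
          rintro _ ⟨s, ⟨-, hs⟩, rfl⟩ _ ⟨t, ⟨-, ht⟩, rfl⟩ hst
          exact one_div_le_sub_of_den_eq hs ht hst
        · simp only [mem_image, mem_filter]
          rintro _ ⟨s, ⟨hsB, hs⟩, rfl⟩ _ ⟨t, ⟨htB, ht⟩, rfl⟩ -
          have hrs := hr s hsB
          have hrt := hr t htB
          rw [hs] at hrs
          rw [ht] at hrt
          have hhalf : 1 / (((T : ℝ) + 1) * q) ≤ 1 / q / 2 := by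
            rw [div_div, mul_comm (q : ℝ) 2]
            gcongr
            linarith
          linarith [abs_le.1 hrs, abs_le.1 hrt, abs_le.1 (hD s hsB t htB)]
    _ = D * q + 2 := by field_simp; ring
    _ ≤ (D + 2) * q := by linarith

lemma card_filter_den_eq_le (hc : 0 ≤ c) (hq : 0 < q) (hqT : q ≤ T) (hD₀ : 0 ≤ D)
    (hr : ∀ s ∈ B, |v s - r s| ≤ 1 / ((T + 1) * (r s).den))
    (hgap : ∀ s ∈ B, ∀ t ∈ B, s < t → s + (r s).den ≤ t)
    (hv : ∀ s ∈ B, ∀ t ∈ B, s < t → (t : ℝ) - s ≤ c * T ^ 3 * |v s - v t|)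
    (hD : ∀ s ∈ B, ∀ t ∈ B, |v s - v t| ≤ D) :
    (#{s ∈ B | (r s).den = q} : ℝ) ≤ (2 * c + 1) * (D + 2) * T ^ 2 / q := by
  have hq' : (0 : ℝ) < q := by exact_mod_cast hq
  have hfiber : ∀ ρ ∈ image r {s ∈ B | (r s).den = q},
      (#{s ∈ {s ∈ B | (r s).den = q} | r s = ρ} : ℝ) ≤ (2 * c + 1) * T ^ 2 / q ^ 2 := by
    simp only [mem_image, mem_filter]
    rintro _ ⟨s, ⟨-, rfl⟩, rfl⟩
    refine le_trans ?_ (card_filter_eq_rat_le hc hqT hr hgap hv)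
    gcongr
    exact filter_subset _ _
  rw [card_eq_sum_card_image r, Nat.cast_sum]
  calc _ ≤ #(image r {s ∈ B | (r s).den = q}) • ((2 * c + 1) * T ^ 2 / q ^ 2) :=
        sum_le_card_nsmul _ _ _ hfiber
    _ ≤ (D + 2) * q * ((2 * c + 1) * T ^ 2 / q ^ 2) := by
        rw [nsmul_eq_mul]
        gcongr
        exact card_image_filter_den_eq_le hq hD₀ hr hD (hq.trans_le hqT)
    _ = (2 * c + 1) * (D + 2) * T ^ 2 / q := by field_simp

lemma card_le_mul_one_add_log (hc : 0 ≤ c) (hD₀ : 0 ≤ D) (hrT : ∀ s ∈ B, (r s).den ≤ T)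
    (hr : ∀ s ∈ B, |v s - r s| ≤ 1 / ((T + 1) * (r s).den))
    (hgap : ∀ s ∈ B, ∀ t ∈ B, s < t → s + (r s).den ≤ t)
    (hv : ∀ s ∈ B, ∀ t ∈ B, s < t → (t : ℝ) - s ≤ c * T ^ 3 * |v s - v t|)
    (hD : ∀ s ∈ B, ∀ t ∈ B, |v s - v t| ≤ D) :
    (#B : ℝ) ≤ (2 * c + 1) * (D + 2) * T ^ 2 * (1 + Real.log T) := by
  have hmaps : Set.MapsTo (fun s => (r s).den) B (Icc 1 T) := fun s hs =>
    mem_Icc.2 ⟨(r s).pos, hrT s hs⟩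
  rw [card_eq_sum_card_fiberwise hmaps, Nat.cast_sum]
  calc _ ≤ ∑ q ∈ Icc 1 T, (2 * c + 1) * (D + 2) * (T : ℝ) ^ 2 / q := sum_le_sum fun q hq =>
        card_filter_den_eq_le hc (mem_Icc.1 hq).1 (mem_Icc.1 hq).2 hD₀ hr hgap hv hD
    _ = (2 * c + 1) * (D + 2) * T ^ 2 * (harmonic T : ℝ) := by
        simp only [harmonic_eq_sum_Icc, Rat.cast_sum, Rat.cast_inv, Rat.cast_natCast, mul_sum,
          div_eq_mul_inv]
    _ ≤ (2 * c + 1) * (D + 2) * T ^ 2 * (1 + Real.log T) := by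
        gcongr
        exact harmonic_le_one_add_log T

lemma abs_sub_rat_line_le {x z slope : ℝ} {ρ : ℚ} {u : ℕ} (hρ : ρ.den ≤ T) (hu : u ≤ ρ.den)
    (hslope : |slope - ρ| ≤ 1 / ((T + 1) * ρ.den)) (hx : |x - (z + slope * u)| ≤ u ^ 2 / T ^ 3) :
    |x - (z + ρ.num * u / ρ.den)| ≤ 2 / ρ.den := by
  have hq : (0 : ℝ) < ρ.den := by exact_mod_cast ρ.pos
  have hqT : (ρ.den : ℝ) ≤ T := by exact_mod_cast hρ
  have hT : (0 : ℝ) < T := hq.trans_le hqT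
  have huq : (u : ℝ) ≤ ρ.den := by exact_mod_cast hu
  have hcurvature : |x - (z + slope * u)| ≤ 1 / ρ.den := by
    calc |x - (z + slope * u)| ≤ u ^ 2 / T ^ 3 := hx
      _ ≤ T ^ 2 / T ^ 3 := by
          gcongr
          exact hu.trans hρ
      _ = 1 / T := by field_simp
      _ ≤ 1 / ρ.den := by gcongr
  have hrational : |(slope - ρ) * u| ≤ 1 / ρ.den := by
    calc |(slope - ρ) * u| ≤ 1 / ((T + 1) * ρ.den) * ρ.den := by
          rw [abs_mul, Nat.abs_cast]
          gcongr
      _ = 1 / (T + 1) := by field_simp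
      _ ≤ 1 / ρ.den := by
          gcongr
          linarith
  calc |x - (z + ρ.num * u / ρ.den)| = |x - (z + slope * u) + (slope - ρ) * u| := by
        congr 1
        rw [Rat.cast_def ρ]
        ring
    _ ≤ 1 / ρ.den + 1 / ρ.den := (abs_add_le _ _).trans (add_le_add hcurvature hrational)
    _ = 2 / ρ.den := by ring

/- Voronoi's argument: on a block of length `(r s).den` starting at `s`, where `r s` is a Dirichlet
approximation of the slope, `w` stays within `2 / (r s).den` of an arithmetic progression and the
sawtooth sum is bounded; the curvature of `w` keeps the number of blocks small. -/
lemma abs_sum_sawtooth_le_of_curvature {w : ℕ → ℝ} {N M : ℕ} (hT : 0 < T) (hc : 0 ≤ c)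
    (hD₀ : 0 ≤ D)
    (hw : ∀ s u, N ≤ s → s + u < M → |w (s + u) - (w s + v s * u)| ≤ u ^ 2 / T ^ 3)
    (hv : ∀ s t, N ≤ s → s < t → t < M → (t : ℝ) - s ≤ c * T ^ 3 * |v s - v t|)
    (hD : ∀ s t, N ≤ s → N ≤ t → s < M → t < M → |v s - v t| ≤ D) :
    |∑ n ∈ Ico N M, sawtooth (w n)| ≤
      6 * ((2 * c + 1) * (D + 2) * T ^ 2 * (1 + Real.log T)) + T := by
  choose r hr hrT using fun s : ℕ => Real.exists_rat_abs_sub_le_and_den_le (v s) hT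
  have hblock : ∀ s, N ≤ s → s + (r s).den ≤ M →
      |∑ u ∈ range (r s).den, sawtooth (w (s + u))| ≤ 6 := by
    intro s hs hsM
    refine (abs_sum_range_sawtooth_le (r s).pos (Rat.isCoprime_num_den (r s)) (w s) 2
      fun u hu => ?_).trans_eq (by norm_num)
    exact abs_sub_rat_line_le (hrT s) hu.le (hr s) (hw s u hs (by omega))
  obtain ⟨B, hB, hgap, hsum⟩ := exists_greedy_blocks (fun n => abs_sawtooth_le_one (w n))
    (fun s => (r s).pos) hrT N hblock
  have hcard := card_le_mul_one_add_log hc hD₀ (fun s _ => hrT s) (fun s _ => hr s) hgap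
    (fun s hs t ht hst => hv s t (hB s hs).1 hst (hB t ht).2)
    (fun s hs t ht => hD s t (hB s hs).1 (hB t ht).1 (hB s hs).2 (hB t ht).2)
  linarith

end Slopes

section Hyperbola

variable {y Y N S S' α : ℝ}

lemma abs_div_add_sub_tangent_le (hy : 0 ≤ y) (hN : 0 < N) (hS : N ≤ S) {u : ℝ} (hu : 0 ≤ u) :
    |y / (S + u) - (y / S - y / S ^ 2 * u)| ≤ y * u ^ 2 / N ^ 3 := by
  have hS₀ : 0 < S := hN.trans_le hS
  have heq : y / (S + u) - (y / S - y / S ^ 2 * u) = y * u ^ 2 / (S ^ 2 * (S + u)) := by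
    field_simp
    ring
  rw [heq, abs_of_nonneg (by positivity)]
  gcongr
  calc N ^ 3 = N ^ 2 * N := by ring
    _ ≤ S ^ 2 * (S + u) := by
        gcongr
        linarith

lemma abs_div_sq_sub_div_sq_le (hy : 0 ≤ y) (hN : 0 < N) (hS : N ≤ S) (hS' : N ≤ S') :
    |y / S ^ 2 - y / S' ^ 2| ≤ y / N ^ 2 := by
  have hS₀ : 0 < S := hN.trans_le hS
  have hS₀' : 0 < S' := hN.trans_le hS'
  refine abs_sub_le_of_nonneg_of_le (by positivity) ?_ (by positivity) ?_ <;> gcongr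

lemma sub_le_mul_abs_div_sq_sub_div_sq (hy : 0 < y) (hS : 0 < S) (hSS' : S < S')
    (hS' : S' ≤ 2 * N) : S' - S ≤ 8 * N ^ 3 / y * |y / S ^ 2 - y / S' ^ 2| := by
  have hS₀' : 0 < S' := hS.trans hSS'
  have hdiff : 0 < S' - S := sub_pos.2 hSS'
  have hcube : S ^ 2 * S' ≤ 8 * N ^ 3 := by
    calc S ^ 2 * S' ≤ (2 * N) ^ 2 * (2 * N) := by
          gcongr
          linarith
      _ = 8 * N ^ 3 := by ring
  have hlower : y * (S' - S) / (S ^ 2 * S') ≤ y / S ^ 2 - y / S' ^ 2 := by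
    have heq : y / S ^ 2 - y / S' ^ 2 - y * (S' - S) / (S ^ 2 * S') =
        y * (S' - S) / (S * S' ^ 2) := by
      field_simp
      ring
    have : 0 ≤ y * (S' - S) / (S * S' ^ 2) := by positivity
    linarith
  calc S' - S = S ^ 2 * S' / y * (y * (S' - S) / (S ^ 2 * S')) := by field_simp
    _ ≤ 8 * N ^ 3 / y * (y * (S' - S) / (S ^ 2 * S')) := by gcongr
    _ ≤ 8 * N ^ 3 / y * |y / S ^ 2 - y / S' ^ 2| := by
        have hN : 0 < N := by linarith
        gcongr
        exact hlower.trans (le_abs_self _)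

lemma abs_sum_Ico_sawtooth_le_of_le {T N M : ℕ} (hT : 0 < T) (hY : 0 < Y) (hα : 0 ≤ α)
    (hα' : α ≤ 1) (β : ℝ) (hM : M ≤ 2 * N) (hYT : Y * T ≤ N) (hNT : (N : ℝ) ≤ 2 * (Y * T)) :
    |∑ n ∈ Ico N M, sawtooth (Y ^ 3 / (n + α) - β)| ≤
      774 * ((Y ^ 3 / N ^ 2 + 2) * T ^ 2 * (1 + Real.log T)) + T := by
  have hN : (0 : ℝ) < N := lt_of_lt_of_le (by positivity) hYT
  have hshift : ∀ s : ℕ, N ≤ s → (N : ℝ) ≤ s + α := by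
    intro s hs
    have : (N : ℝ) ≤ s := by exact_mod_cast hs
    linarith
  have hshift' : ∀ s : ℕ, s < M → s + α ≤ 2 * N := by
    intro s hs
    have : (s : ℝ) + 1 ≤ 2 * N := by exact_mod_cast (by omega : s + 1 ≤ 2 * N)
    linarith
  refine (abs_sum_sawtooth_le_of_curvature (v := fun s => -(Y ^ 3 / (s + α) ^ 2)) (c := 64)
    (D := Y ^ 3 / N ^ 2) hT (by norm_num) (by positivity) ?_ ?_ ?_).trans_eq (by ring)
  · intro s u hs _
    calc _ = |Y ^ 3 / (s + α + u) - (Y ^ 3 / (s + α) - Y ^ 3 / (s + α) ^ 2 * u)| := by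
          congr 1
          push_cast
          ring
      _ ≤ Y ^ 3 * u ^ 2 / N ^ 3 :=
          abs_div_add_sub_tangent_le (by positivity) hN (hshift s hs) (by positivity)
      _ ≤ Y ^ 3 * u ^ 2 / (Y * T) ^ 3 := by gcongr
      _ = u ^ 2 / T ^ 3 := by field_simp
  · intro s t hs hst ht
    calc (t : ℝ) - s = t + α - (s + α) := by ring
      _ ≤ 8 * N ^ 3 / Y ^ 3 * |Y ^ 3 / (s + α) ^ 2 - Y ^ 3 / (t + α) ^ 2| :=
          sub_le_mul_abs_div_sq_sub_div_sq (by positivity) (hN.trans_le (hshift s hs))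
            (by gcongr) (hshift' t ht)
      _ ≤ 8 * (2 * (Y * T)) ^ 3 / Y ^ 3 * |Y ^ 3 / (s + α) ^ 2 - Y ^ 3 / (t + α) ^ 2| := by gcongr
      _ = 64 * T ^ 3 * |-(Y ^ 3 / (s + α) ^ 2) - -(Y ^ 3 / (t + α) ^ 2)| := by
          rw [neg_sub_neg, abs_sub_comm (Y ^ 3 / (t + α) ^ 2)]
          field_simp
          ring
  · intro s t hs ht _ _
    rw [neg_sub_neg]
    exact abs_div_sq_sub_div_sq_le (by positivity) hN (hshift t ht) (hshift s hs)

lemma abs_sum_Ico_sawtooth_le {N M : ℕ} (hY : 1 ≤ Y) (hα : 0 ≤ α) (hα' : α ≤ 1) (β : ℝ)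
    (hM : M ≤ 2 * N) (hN : (N : ℝ) ^ 2 ≤ Y ^ 3) :
    |∑ n ∈ Ico N M, sawtooth (Y ^ 3 / (n + α) - β)| ≤ 2500 * Y * (1 + Real.log Y) := by
  have hY₀ : 0 < Y := by positivity
  have hlog : 0 ≤ Y * Real.log Y := mul_nonneg hY₀.le (Real.log_nonneg hY)
  rcases lt_or_ge (N : ℝ) Y with hNY | hNY
  · calc _ ≤ #(Ico N M) • (1 : ℝ) := (abs_sum_le_sum_abs _ _).trans
          (sum_le_card_nsmul _ _ _ fun n _ => abs_sawtooth_le_one _)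
      _ = (M - N : ℕ) := by simp
      _ ≤ N := by exact_mod_cast (by omega)
      _ ≤ 2500 * Y * (1 + Real.log Y) := by linarith
  set T : ℕ := ⌊N / Y⌋₊
  have hT : 0 < T := Nat.floor_pos.2 ((one_le_div hY₀).2 hNY)
  have hT' : (1 : ℝ) ≤ T := by exact_mod_cast hT
  have hYT : Y * T ≤ N := (le_div_iff₀' hY₀).1 (Nat.floor_le (by positivity))
  have hNT : (N : ℝ) ≤ 2 * (Y * T) := by
    calc (N : ℝ) ≤ Y * (T + 1) := ((div_lt_iff₀' hY₀).1 (Nat.lt_floor_add_one _)).le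
      _ ≤ Y * (T + T) := by gcongr
      _ = 2 * (Y * T) := by ring
  have hTY : (T : ℝ) ^ 2 ≤ Y := by
    refine le_of_mul_le_mul_left (a := Y ^ 2) ?_ (by positivity)
    calc Y ^ 2 * T ^ 2 = (Y * T) ^ 2 := by ring
      _ ≤ (N : ℝ) ^ 2 := by gcongr
      _ ≤ Y ^ 2 * Y := by linarith
  have hTY' : (T : ℝ) ≤ Y := (le_self_pow₀ hT' two_ne_zero).trans hTY
  have hmain : (Y ^ 3 / N ^ 2 + 2) * T ^ 2 ≤ 3 * Y := by
    calc (Y ^ 3 / N ^ 2 + 2) * (T : ℝ) ^ 2 ≤ (Y ^ 3 / (Y * T) ^ 2 + 2) * T ^ 2 := by gcongr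
      _ = Y + 2 * T ^ 2 := by field_simp
      _ ≤ 3 * Y := by linarith
  calc _ ≤ 774 * ((Y ^ 3 / N ^ 2 + 2) * T ^ 2 * (1 + Real.log T)) + T :=
        abs_sum_Ico_sawtooth_le_of_le hT hY₀ hα hα' β hM hYT hNT
    _ ≤ 774 * (3 * Y * (1 + Real.log Y)) + Y := by gcongr
    _ ≤ 2500 * Y * (1 + Real.log Y) := by linarith

lemma abs_sum_Ico_one_le_of_dyadic {φ : ℕ → ℝ} {K : ℝ} {A : ℕ}
    (h : ∀ N M, M ≤ 2 * N → M ≤ A → |∑ n ∈ Ico N M, φ n| ≤ K) {k : ℕ} (hk : A ≤ 2 ^ k) :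
    |∑ n ∈ Ico 1 A, φ n| ≤ k * K := by
  have hK : 0 ≤ K := by simpa using h 0 0 le_rfl A.zero_le
  induction k generalizing A with
  | zero =>
    rw [Ico_eq_empty_of_le (by simpa using hk)]
    simp
  | succ k ih =>
    rcases le_or_gt A 1 with hA | hA
    · rw [Ico_eq_empty_of_le hA, sum_empty, abs_zero]
      positivity
    rw [pow_succ] at hk
    have hhead := ih (A := (A + 1) / 2) (fun N M hM hMA => h N M hM (by omega)) (by omega)
    have htail := h ((A + 1) / 2) A (by omega) le_rfl
    rw [← sum_Ico_consecutive φ (show 1 ≤ (A + 1) / 2 by omega) (show (A + 1) / 2 ≤ A by omega)]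
    push_cast
    linarith [abs_add_le (∑ n ∈ Ico 1 ((A + 1) / 2), φ n) (∑ n ∈ Ico ((A + 1) / 2) A, φ n)]

lemma abs_sum_Icc_sawtooth_le {A : ℕ} (hY : 1 ≤ Y) (hα : 0 ≤ α) (hα' : α ≤ 1) (β : ℝ)
    (hA : (A : ℝ) ^ 2 ≤ Y ^ 3) :
    |∑ n ∈ Icc 1 A, sawtooth (Y ^ 3 / (n + α) - β)| ≤ 7500 * Y * (1 + Real.log Y) ^ 2 := by
  have hlog : 0 ≤ Real.log Y := Real.log_nonneg hY
  rcases A.eq_zero_or_pos with rfl | hA₀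
  · simp only [zero_lt_one, Icc_eq_empty_of_lt, sum_empty, abs_zero]
    positivity
  have hlogA : 2 * Real.log A ≤ 3 * Real.log Y := by
    have := Real.log_le_log (by positivity) hA
    rwa [Real.log_pow, Real.log_pow] at this
  have hk : ((Nat.log 2 A + 1 : ℕ) : ℝ) ≤ 3 * (1 + Real.log Y) := by
    have hlogb : Real.logb (2 : ℕ) A ≤ 3 * Real.log Y := by
      rw [Real.logb, div_le_iff₀ (Real.log_pos (by norm_num))]
      calc Real.log A ≤ 3 * Real.log Y * (1 / 2) := by linarith
        _ ≤ 3 * Real.log Y * Real.log (2 : ℕ) := by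
            gcongr
            push_cast
            linarith [Real.log_two_gt_d9]
    push_cast
    linarith [Real.natLog_le_logb A 2]
  calc |∑ n ∈ Ico 1 (A + 1), sawtooth (Y ^ 3 / (n + α) - β)|
      ≤ (Nat.log 2 A + 1 : ℕ) * (2500 * Y * (1 + Real.log Y)) := by
        refine abs_sum_Ico_one_le_of_dyadic (fun N M hM hMA => ?_)
          (Nat.lt_pow_succ_log_self one_lt_two A)
        rcases le_or_gt M N with hMN | hMN
        · rw [Ico_eq_empty_of_le hMN, sum_empty, abs_zero]
          positivity
        · refine abs_sum_Ico_sawtooth_le hY hα hα' β hM (le_trans ?_ hA)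
          gcongr
          omega
    _ ≤ 3 * (1 + Real.log Y) * (2500 * Y * (1 + Real.log Y)) := by gcongr
    _ = 7500 * Y * (1 + Real.log Y) ^ 2 := by ring

end Hyperbola

lemma one_add_log_le_mul_rpow {x δ : ℝ} (hx : 1 ≤ x) (hδ : 0 < δ) :
    1 + Real.log x ≤ (1 + 1 / δ) * x ^ δ := by
  calc 1 + Real.log x ≤ x ^ δ + x ^ δ / δ :=
        add_le_add (Real.one_le_rpow hx hδ.le) (Real.log_le_rpow_div (by positivity) hδ)
    _ = (1 + 1 / δ) * x ^ δ := by ring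

lemma exists_abs_sum_sawtooth_le {θ : ℝ} (hθ : 1 / 3 < θ) :
    ∃ C : ℝ, 0 ≤ C ∧ ∀ y α β : ℝ, 1 ≤ y → 0 ≤ α → α ≤ 1 →
      |∑ n ∈ Icc 1 ⌊√y⌋₊, sawtooth (y / (n + α) - β)| ≤ C * y ^ θ := by
  set δ : ℝ := (3 * θ - 1) / 2 with hδ_def
  have hδ : 0 < δ := by linarith
  refine ⟨7500 * (1 + 1 / δ) ^ 2, by positivity, fun y α β hy hα hα' => ?_⟩
  have hy₀ : 0 < y := by positivity
  set Y : ℝ := y ^ (1 / 3 : ℝ) with hY_def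
  have hY : 1 ≤ Y := Real.one_le_rpow hy (by norm_num)
  have hY₃ : Y ^ 3 = y := by
    rw [hY_def, ← Real.rpow_mul_natCast hy₀.le]
    norm_num
  have hsqrt : (⌊√y⌋₊ : ℝ) ^ 2 ≤ Y ^ 3 := by
    rw [hY₃, ← Real.le_sqrt (by positivity) hy₀.le]
    exact Nat.floor_le (Real.sqrt_nonneg y)
  have hpow : Y * (Y ^ δ) ^ 2 = y ^ θ := by
    rw [← Real.rpow_mul_natCast (by positivity), ← Real.rpow_one_add' (by positivity)
      (by positivity), hY_def, ← Real.rpow_mul hy₀.le, hδ_def]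
    congr 1
    push_cast
    ring
  have hlog : 0 ≤ Real.log Y := Real.log_nonneg hY
  have hsum := abs_sum_Icc_sawtooth_le hY hα hα' β hsqrt
  rw [hY₃] at hsum
  calc _ ≤ 7500 * Y * (1 + Real.log Y) ^ 2 := hsum
    _ ≤ 7500 * Y * ((1 + 1 / δ) * Y ^ δ) ^ 2 := by
        gcongr
        exact one_add_log_le_mul_rpow hY hδ
    _ = 7500 * (1 + 1 / δ) ^ 2 * (Y * (Y ^ δ) ^ 2) := by ring
    _ = 7500 * (1 + 1 / δ) ^ 2 * y ^ θ := by rw [hpow]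

section Counting

variable {y α : ℝ} {A X : ℕ}

lemma floor_div_sub_eq_card (hα : 0 ≤ α) (hA' : y < (A + 1) ^ 2) {n : ℕ} (hn : A < n) :
    ⌊y / n - α⌋₊ = #((Icc 1 A).filter fun l : ℕ => (n : ℝ) * (l + α) ≤ y) := by
  have hnA : (A : ℝ) + 1 ≤ n := by exact_mod_cast hn
  have hn₀ : (0 : ℝ) < n := by linarith [Nat.cast_nonneg (α := ℝ) A]
  have hset : ((Icc 1 A).filter fun l : ℕ => (n : ℝ) * (l + α) ≤ y) = Icc 1 ⌊y / n - α⌋₊ := by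
    ext l
    simp only [mem_filter, mem_Icc]
    have hiff : 1 ≤ l → ((n : ℝ) * (l + α) ≤ y ↔ l ≤ ⌊y / n - α⌋₊) := fun hl => by
      rw [Nat.le_floor_iff' (by omega), le_sub_iff_add_le, le_div_iff₀' hn₀]
    refine ⟨fun h => ⟨h.1.1, (hiff h.1.1).1 h.2⟩, fun h => ⟨⟨h.1, ?_⟩, (hiff h.1).2 h.2⟩⟩
    by_contra! hlA
    have hlA' : (A : ℝ) + 1 ≤ l := by exact_mod_cast hlA
    have : ((A : ℝ) + 1) ^ 2 ≤ y := by
      calc ((A : ℝ) + 1) ^ 2 = (A + 1) * (A + 1) := by ring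
        _ ≤ n * (l + α) := by
            have : (A : ℝ) + 1 ≤ l + α := by linarith
            gcongr
        _ ≤ y := (hiff h.1).2 h.2
    linarith
  rw [hset, Nat.card_Icc, Nat.add_sub_cancel]

lemma card_filter_mul_le_eq (hy : 0 ≤ y) (hα : 0 ≤ α) (hX : ⌊y⌋₊ ≤ X) {l : ℕ} (hl : 1 ≤ l) :
    #((Ioc A X).filter fun n : ℕ => (n : ℝ) * (l + α) ≤ y) = ⌊y / (l + α)⌋₊ - A := by
  have hl' : (1 : ℝ) ≤ l := by exact_mod_cast hl
  have hle : ⌊y / (l + α)⌋₊ ≤ X :=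
    (Nat.floor_le_floor (div_le_self hy (by linarith))).trans hX
  have hset : ((Ioc A X).filter fun n : ℕ => (n : ℝ) * (l + α) ≤ y) = Ioc A ⌊y / (l + α)⌋₊ := by
    ext n
    rw [mem_filter, mem_Ioc, mem_Ioc, ← le_div_iff₀ (by positivity),
      ← Nat.le_floor_iff (by positivity)]
    omega
  rw [hset, Nat.card_Ioc]

lemma sum_floor_div_sub_eq (hα : 0 ≤ α) (hA : (A : ℝ) ^ 2 ≤ y) (hA' : y < (A + 1) ^ 2)
    (hX : ⌊y⌋₊ ≤ X) :
    ∑ n ∈ Icc 1 X, ⌊y / n - α⌋₊ =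
      ∑ n ∈ Icc 1 A, ⌊y / n - α⌋₊ + ∑ l ∈ Icc 1 A, (⌊y / (l + α)⌋₊ - A) := by
  have hAX : A ≤ X := by
    refine le_trans ((Nat.le_self_pow two_ne_zero A).trans (Nat.le_floor ?_)) hX
    exact_mod_cast hA
  have htail : ∑ n ∈ Ioc A X, ⌊y / n - α⌋₊ = ∑ l ∈ Icc 1 A, (⌊y / (l + α)⌋₊ - A) := by
    calc ∑ n ∈ Ioc A X, ⌊y / n - α⌋₊
        = ∑ n ∈ Ioc A X, #((Icc 1 A).filter fun l : ℕ => (n : ℝ) * (l + α) ≤ y) :=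
          sum_congr rfl fun n hn => floor_div_sub_eq_card hα hA' (mem_Ioc.1 hn).1
      _ = ∑ l ∈ Icc 1 A, #((Ioc A X).filter fun n : ℕ => (n : ℝ) * (l + α) ≤ y) :=
          sum_card_bipartiteAbove_eq_sum_card_bipartiteBelow _
      _ = ∑ l ∈ Icc 1 A, (⌊y / (l + α)⌋₊ - A) := sum_congr rfl fun l hl =>
          card_filter_mul_le_eq ((sq_nonneg _).trans hA) hα hX (mem_Icc.1 hl).1
  have hunion : Icc 1 X = Icc 1 A ∪ Ioc A X := by
    ext n
    simp only [mem_union, mem_Icc, mem_Ioc]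
    omega
  have hdisj : Disjoint (Icc 1 A) (Ioc A X) := disjoint_left.2 fun n hn hn' => by
    simp only [mem_Icc, mem_Ioc] at hn hn'
    omega
  rw [hunion, sum_union hdisj, htail]

lemma abs_sum_floor_div_add_tsub_sub_le (hα : 0 ≤ α) (hα' : α ≤ 1) (hA : (A : ℝ) ^ 2 ≤ y) :
    |∑ l ∈ Icc 1 A, ((⌊y / (l + α)⌋₊ - A : ℕ) : ℝ) -
      (∑ l ∈ Icc 1 A, (⌊y / (l + α)⌋₊ : ℝ) - A ^ 2)| ≤ 1 := by
  have hfloor : ∀ l ∈ Icc 1 A, A - 1 ≤ ⌊y / (l + α)⌋₊ ∧ (l ≠ A → A ≤ ⌊y / (l + α)⌋₊) := by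
    intro l hl
    obtain ⟨hl₁, hlA⟩ := mem_Icc.1 hl
    have hl₁' : (1 : ℝ) ≤ l := by exact_mod_cast hl₁
    have hlA' : (l : ℝ) ≤ A := by exact_mod_cast hlA
    refine ⟨Nat.le_floor ?_, fun hne => Nat.le_floor ?_⟩ <;> rw [le_div_iff₀ (by positivity)]
    · rw [Nat.cast_pred (by omega)]
      calc ((A : ℝ) - 1) * (l + α) ≤ (A - 1) * (A + 1) := by
            gcongr
            linarith
        _ ≤ y := by linarith
    · have : (l : ℝ) + 1 ≤ A := by exact_mod_cast (by omega : l + 1 ≤ A)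
      calc (A : ℝ) * (l + α) ≤ A * A := by
            gcongr
            linarith
        _ ≤ y := by linarith
  have hterm : ∀ l ∈ Icc 1 A,
      |((⌊y / (l + α)⌋₊ - A : ℕ) : ℝ) - (⌊y / (l + α)⌋₊ - A)| ≤ if l = A then 1 else 0 := by
    intro l hl
    obtain ⟨hpred, hlt⟩ := hfloor l hl
    split_ifs with h
    · have hpred' : (A : ℝ) ≤ ⌊y / (l + α)⌋₊ + 1 := by exact_mod_cast (by omega)
      rcases le_total A ⌊y / (l + α)⌋₊ with hle | hle
      · simp [Nat.cast_sub hle]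
      · have hle' : (⌊y / (l + α)⌋₊ : ℝ) ≤ A := by exact_mod_cast hle
        rw [Nat.sub_eq_zero_of_le hle, Nat.cast_zero, zero_sub, neg_sub, abs_le]
        constructor <;> linarith
    · rw [Nat.cast_sub (hlt h), sub_self, abs_zero]
  calc _ = |∑ l ∈ Icc 1 A, (((⌊y / (l + α)⌋₊ - A : ℕ) : ℝ) - (⌊y / (l + α)⌋₊ - A))| := by
        congr 1
        simp only [sum_sub_distrib, sum_const, Nat.card_Icc, Nat.add_sub_cancel, nsmul_eq_mul]
        ring
    _ ≤ ∑ l ∈ Icc 1 A, if l = A then (1 : ℝ) else 0 :=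
        (abs_sum_le_sum_abs _ _).trans (sum_le_sum hterm)
    _ ≤ 1 := by
        rw [sum_ite_eq']
        split_ifs <;> norm_num

lemma abs_sum_floor_div_sub_sub_le (hα : 0 ≤ α) (hα' : α ≤ 1) (hA : (A : ℝ) ^ 2 ≤ y)
    (hA' : y < (A + 1) ^ 2) (hX : ⌊y⌋₊ ≤ X) :
    |∑ n ∈ Icc 1 X, (⌊y / n - α⌋₊ : ℝ) - (∑ n ∈ Icc 1 A, (⌊y / n - α⌋₊ : ℝ) +
      ∑ l ∈ Icc 1 A, (⌊y / (l + α)⌋₊ : ℝ) - A ^ 2)| ≤ 1 := by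
  have hsplit := congrArg (Nat.cast (R := ℝ)) (sum_floor_div_sub_eq hα hA hA' hX)
  push_cast at hsplit
  refine (congrArg abs ?_).trans_le (abs_sum_floor_div_add_tsub_sub_le hα hα' hA)
  rw [hsplit]
  ring

lemma sum_floor_div_sub_eq_add_sawtooth (hα : α ≤ 1) (hA : (A : ℝ) ^ 2 ≤ y) :
    ∑ n ∈ Icc 1 A, (⌊y / n - α⌋₊ : ℝ) =
      y * ∑ n ∈ Icc 1 A, 1 / (n : ℝ) - A * α - A / 2 + ∑ n ∈ Icc 1 A, sawtooth (y / n - α) := by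
  have hterm : ∀ n ∈ Icc 1 A, (⌊y / n - α⌋₊ : ℝ) =
      y * (1 / (n : ℝ)) - α - 1 / 2 + sawtooth (y / n - α) := by
    intro n hn
    have hn₁ : (1 : ℝ) ≤ n := by exact_mod_cast (mem_Icc.1 hn).1
    have hnA : (n : ℝ) ≤ A := by exact_mod_cast (mem_Icc.1 hn).2
    have hle : 1 ≤ y / n := by
      rw [one_le_div (by positivity)]
      exact (hnA.trans (le_self_pow₀ (hn₁.trans hnA) two_ne_zero)).trans hA
    rw [natCast_floor_eq_add_sawtooth (by linarith)]
    ring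
  rw [sum_congr rfl hterm]
  simp only [sum_add_distrib, sum_sub_distrib, mul_sum, sum_const, Nat.card_Icc,
    Nat.add_sub_cancel, nsmul_eq_mul]
  ring

lemma sum_floor_div_add_eq_add_sawtooth (hy : 0 ≤ y) (hα : 0 ≤ α) :
    ∑ l ∈ Icc 1 A, (⌊y / (l + α)⌋₊ : ℝ) =
      y * ∑ l ∈ Icc 1 A, 1 / (l + α) - A / 2 + ∑ l ∈ Icc 1 A, sawtooth (y / (l + α)) := by
  have hterm : ∀ l ∈ Icc 1 A, (⌊y / (l + α)⌋₊ : ℝ) =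
      y * (1 / (l + α)) - 1 / 2 + sawtooth (y / (l + α)) := by
    intro l _
    rw [natCast_floor_eq_add_sawtooth (by positivity)]
    ring
  rw [sum_congr rfl hterm]
  simp only [sum_add_distrib, sum_sub_distrib, mul_sum, sum_const, Nat.card_Icc,
    Nat.add_sub_cancel, nsmul_eq_mul]
  ring

lemma natCast_floor_sqrt_sq_le (hy : 0 ≤ y) : (⌊√y⌋₊ : ℝ) ^ 2 ≤ y := by
  rw [← Real.le_sqrt (by positivity) hy]
  exact Nat.floor_le (Real.sqrt_nonneg y)

lemma lt_natCast_floor_sqrt_add_one_sq (y : ℝ) : y < ((⌊√y⌋₊ : ℝ) + 1) ^ 2 :=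
  Real.lt_sq_of_sqrt_lt (Nat.lt_floor_add_one _)

lemma exists_abs_sum_floor_div_sub_sub_le {θ : ℝ} (hθ : 1 / 3 < θ) :
    ∃ C : ℝ, 0 ≤ C ∧ ∀ (y α : ℝ) (X : ℕ), 1 ≤ y → 0 ≤ α → α ≤ 1 → ⌊y⌋₊ ≤ X →
      |∑ n ∈ Icc 1 X, (⌊y / n - α⌋₊ : ℝ) - (y * ∑ n ∈ Icc 1 ⌊√y⌋₊, 1 / (n : ℝ) +
        y * ∑ l ∈ Icc 1 ⌊√y⌋₊, 1 / (l + α) - ⌊√y⌋₊ * α - ⌊√y⌋₊ - ⌊√y⌋₊ ^ 2)| ≤ C * y ^ θ := by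
  obtain ⟨C, hC, hsaw⟩ := exists_abs_sum_sawtooth_le hθ
  refine ⟨2 * C + 1, by positivity, fun y α X hy hα hα' hX => ?_⟩
  have hy₀ : 0 ≤ y := by positivity
  have hA := natCast_floor_sqrt_sq_le hy₀
  have hrows := hsaw y 0 α hy le_rfl zero_le_one
  have hcols := hsaw y α 0 hy hα hα'
  have hmain := abs_sum_floor_div_sub_sub_le hα hα' hA (lt_natCast_floor_sqrt_add_one_sq y) hX
  rw [sum_floor_div_sub_eq_add_sawtooth hα' hA, sum_floor_div_add_eq_add_sawtooth hy₀ hα] at hmain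
  have hone : 1 ≤ y ^ θ := Real.one_le_rpow hy (by linarith)
  simp only [add_zero, sub_zero] at hrows hcols
  rw [abs_le] at hrows hcols hmain ⊢
  constructor <;> linarith

end Counting

section RealHarmonic

variable {a α : ℝ}

/-- The harmonic number `H_α` of real order `α`, equal to `1 + 1/2 + ⋯ + 1/α` when `α` is a natural
number. It is the density in the count of lattice points with `n * l ≤ y < n * (l + α)`. -/
noncomputable def realHarmonic (α : ℝ) : ℝ := ∑' l : ℕ, (1 / ((l : ℝ) + 1) - 1 / (l + 1 + α))

lemma hasSum_one_div_sub_one_div_add_one (ha : 0 < a) :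
    HasSum (fun j : ℕ => 1 / (a + j) - 1 / (a + j + 1)) (1 / a) := by
  rw [hasSum_iff_tendsto_nat_of_nonneg fun j => sub_nonneg.2 <|
    one_div_le_one_div_of_le (by positivity) (by linarith)]
  have hpartial (n : ℕ) : ∑ j ∈ range n, (1 / (a + j) - 1 / (a + j + 1)) = 1 / a - 1 / (a + n) := by
    simpa [add_assoc] using sum_range_sub' (fun j : ℕ => 1 / (a + j)) n
  simp_rw [hpartial]
  have hlim : Tendsto (fun n : ℕ => 1 / (a + n)) atTop (nhds 0) :=
    tendsto_const_nhds.div_atTop (tendsto_atTop_add_const_left _ _ tendsto_natCast_atTop_atTop)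
  simpa using tendsto_const_nhds.sub hlim

lemma one_div_sub_one_div_add_nonneg (ha : 0 < a) (hα : 0 ≤ α) : 0 ≤ 1 / a - 1 / (a + α) := by
  rw [sub_nonneg]
  gcongr
  linarith

lemma one_div_sub_one_div_add_le (ha : 0 < a) (hα : 0 ≤ α) :
    1 / (a + 1) - 1 / (a + 1 + α) ≤ α * (1 / a - 1 / (a + 1)) := by
  calc 1 / (a + 1) - 1 / (a + 1 + α) = α * (1 / ((a + 1) * (a + 1 + α))) := by
        field_simp
        ring
    _ ≤ α * (1 / ((a + 1) * a)) := by
        gcongr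
        linarith
    _ = α * (1 / a - 1 / (a + 1)) := by
        field_simp
        ring

lemma mul_one_div_sub_one_div_add_one_le (ha : 0 < a) (hα : 0 ≤ α) (hα' : α ≤ 1) :
    α * (1 / a - 1 / (a + 1)) ≤ 1 / a - 1 / (a + α) := by
  calc α * (1 / a - 1 / (a + 1)) = α * (1 / (a * (a + 1))) := by
        field_simp
        ring
    _ ≤ α * (1 / (a * (a + α))) := by gcongr
    _ = 1 / a - 1 / (a + α) := by
        field_simp
        ring

lemma summable_one_div_sub_one_div_add (hα : 0 ≤ α) :
    Summable fun l : ℕ => 1 / ((l : ℝ) + 1) - 1 / (l + 1 + α) := by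
  rw [← summable_nat_add_iff 1]
  refine Summable.of_nonneg_of_le (fun l => one_div_sub_one_div_add_nonneg (by positivity) hα)
    (fun l => ?_) ((hasSum_one_div_sub_one_div_add_one one_pos).summable.mul_left α)
  have := one_div_sub_one_div_add_le (a := 1 + l) (by positivity) hα
  push_cast
  rwa [add_comm (l : ℝ) 1]

lemma hasSum_realHarmonic_sub_sum (hα : 0 ≤ α) (A : ℕ) :
    HasSum (fun j : ℕ => 1 / ((A : ℝ) + j + 1) - 1 / (A + j + 1 + α))
      (realHarmonic α - ∑ l ∈ Icc 1 A, (1 / (l : ℝ) - 1 / (l + α))) := by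
  have hsum : ∑ l ∈ Icc 1 A, (1 / (l : ℝ) - 1 / (l + α)) =
      ∑ l ∈ range A, (1 / ((l : ℝ) + 1) - 1 / (l + 1 + α)) := by
    rw [range_eq_Ico]
    exact_mod_cast (sum_Ico_add' (fun l : ℕ => 1 / (l : ℝ) - 1 / (l + α)) 0 A 1).symm
  rw [hsum, realHarmonic]
  simpa only [Nat.cast_add, add_comm (A : ℝ)] using
    (hasSum_nat_add_iff' A).2 (summable_one_div_sub_one_div_add hα).hasSum

lemma div_le_realHarmonic_sub_sum (hα : 0 ≤ α) (hα' : α ≤ 1) (A : ℕ) :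
    α / (A + 1) ≤ realHarmonic α - ∑ l ∈ Icc 1 A, (1 / (l : ℝ) - 1 / (l + α)) := by
  rw [← mul_one_div]
  refine hasSum_le (fun j => ?_)
    ((hasSum_one_div_sub_one_div_add_one (a := A + 1) (by positivity)).mul_left α)
    (hasSum_realHarmonic_sub_sum hα A)
  rw [add_right_comm (A : ℝ) j 1]
  exact mul_one_div_sub_one_div_add_one_le (by positivity) hα hα'

lemma realHarmonic_sub_sum_le_div (hα : 0 ≤ α) {A : ℕ} (hA : 0 < A) :
    realHarmonic α - ∑ l ∈ Icc 1 A, (1 / (l : ℝ) - 1 / (l + α)) ≤ α / A := by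
  have hA' : (0 : ℝ) < A := by exact_mod_cast hA
  rw [← mul_one_div]
  exact hasSum_le (fun j => one_div_sub_one_div_add_le (by positivity) hα)
    (hasSum_realHarmonic_sub_sum hα A) ((hasSum_one_div_sub_one_div_add_one hA').mul_left α)

lemma realHarmonic_nonneg (hα : 0 ≤ α) : 0 ≤ realHarmonic α :=
  tsum_nonneg fun _ => one_div_sub_one_div_add_nonneg (by positivity) hα

lemma realHarmonic_le (hα : 0 ≤ α) : realHarmonic α ≤ 2 * α := by
  have htail := realHarmonic_sub_sum_le_div hα one_pos
  have hhead : 1 - 1 / (1 + α) ≤ α := by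
    rw [one_sub_div (by positivity), add_sub_cancel_left]
    exact div_le_self hα (by linarith)
  simp only [Icc_self, sum_singleton, Nat.cast_one, div_one] at htail
  linarith

lemma abs_mul_realHarmonic_sub_sum_sub_le {y : ℝ} {A : ℕ} (hα : 0 ≤ α) (hα' : α ≤ 1)
    (hA : 0 < A) (hAy : (A : ℝ) ^ 2 ≤ y) (hAy' : y < (A + 1) ^ 2) :
    |y * (realHarmonic α - ∑ l ∈ Icc 1 A, (1 / (l : ℝ) - 1 / (l + α))) - A * α| ≤ 3 := by
  have hA' : (1 : ℝ) ≤ A := by exact_mod_cast hA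
  have hy : 0 ≤ y := (sq_nonneg _).trans hAy
  have hlower : A * α - 1 ≤ y * (α / (A + 1)) := by
    rw [← mul_div_assoc, le_div_iff₀ (by positivity)]
    nlinarith
  have hupper : y * (α / A) ≤ A * α + 3 := by
    rw [← mul_div_assoc, div_le_iff₀ (by positivity)]
    nlinarith
  have := mul_le_mul_of_nonneg_left (div_le_realHarmonic_sub_sum hα hα' A) hy
  have := mul_le_mul_of_nonneg_left (realHarmonic_sub_sum_le_div hα hA) hy
  rw [abs_le]
  constructor <;> linarith

lemma exists_abs_sum_floor_sub_floor_sub_le {θ : ℝ} (hθ : 1 / 3 < θ) :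
    ∃ C : ℝ, 0 ≤ C ∧ ∀ (y α : ℝ) (X : ℕ), 1 ≤ y → 0 ≤ α → α ≤ 1 → ⌊y⌋₊ ≤ X →
      |∑ n ∈ Icc 1 X, ((⌊y / n⌋₊ : ℝ) - ⌊y / n - α⌋₊) - y * realHarmonic α| ≤ C * y ^ θ := by
  obtain ⟨C, hC, hcount⟩ := exists_abs_sum_floor_div_sub_sub_le hθ
  refine ⟨2 * C + 3, by positivity, fun y α X hy hα hα' hX => ?_⟩
  have hunshifted := hcount y 0 X hy le_rfl zero_le_one hX
  have hshifted := hcount y α X hy hα hα' hX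
  have htail := abs_mul_realHarmonic_sub_sum_sub_le hα hα'
    (Nat.floor_pos.2 (Real.one_le_sqrt.2 hy)) (natCast_floor_sqrt_sq_le (by positivity))
    (lt_natCast_floor_sqrt_add_one_sq y)
  have hone : 1 ≤ y ^ θ := Real.one_le_rpow hy (by linarith)
  simp only [add_zero, sub_zero, mul_zero] at hunshifted
  rw [sum_sub_distrib]
  rw [sum_sub_distrib, mul_sub, mul_sub] at htail
  rw [abs_le] at hunshifted hshifted htail ⊢
  constructor <;> linarith

end RealHarmonic

section DivisorCount

variable {x θ : ℝ}

/-- The number of `n ≤ x` for which `d` divides `⌊x / n⌋`: the multiplicity with which the divisor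
`d` occurs when a divisor sum is evaluated at all the `⌊x / n⌋`. -/
noncomputable def countDvdFloor (x : ℝ) (d : ℕ) : ℕ :=
  #{n ∈ Icc 1 ⌊x⌋₊ | d ∣ ⌊x / (n : ℕ)⌋₊}

lemma one_le_div_of_mem_Icc_floor {n : ℕ} (hn : n ∈ Icc 1 ⌊x⌋₊) : 1 ≤ x / n := by
  obtain ⟨hn₁, hnx⟩ := mem_Icc.1 hn
  rw [one_le_div (by exact_mod_cast hn₁)]
  exact (Nat.le_floor_iff' (by omega)).1 hnx

lemma floor_div_ne_zero_of_mem_Icc_floor {n : ℕ} (hn : n ∈ Icc 1 ⌊x⌋₊) : ⌊x / n⌋₊ ≠ 0 :=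
  (Nat.floor_pos.2 (one_le_div_of_mem_Icc_floor hn)).ne'

lemma countDvdFloor_eq_sum (x : ℝ) (d : ℕ) :
    (countDvdFloor x d : ℝ) =
      ∑ n ∈ Icc 1 ⌊x⌋₊, ((⌊x / d / n⌋₊ : ℝ) - ⌊x / d / n - 1 / d⌋₊) := by
  rw [countDvdFloor, natCast_card_filter]
  refine sum_congr rfl fun n hn => ?_
  have hfloor : ⌊x / d / n⌋₊ = ⌊x / n⌋₊ / d := by rw [div_right_comm, Nat.floor_div_natCast]
  have hfloor_sub : ⌊x / d / n - 1 / d⌋₊ = (⌊x / n⌋₊ - 1) / d := by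
    rw [div_right_comm, ← sub_div, Nat.floor_div_natCast, Nat.floor_sub_one]
  have hsucc := Nat.succ_div (a := ⌊x / n⌋₊ - 1) (b := d)
  rw [Nat.sub_add_cancel (Nat.one_le_iff_ne_zero.2 (floor_div_ne_zero_of_mem_Icc_floor hn))]
    at hsucc
  rw [hfloor, hfloor_sub, hsucc]
  push_cast
  ring

lemma countDvdFloor_eq_zero {d : ℕ} (hx : 0 ≤ x) (hd : x < d) : countDvdFloor x d = 0 := by
  rw [countDvdFloor, card_eq_zero, filter_eq_empty_iff]
  intro n hn hdvd
  have hle := Nat.le_of_dvd (Nat.pos_of_ne_zero (floor_div_ne_zero_of_mem_Icc_floor hn)) hdvd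
  have hn₁ : (1 : ℝ) ≤ n := by exact_mod_cast (mem_Icc.1 hn).1
  have : (d : ℝ) ≤ x := ((Nat.le_floor_iff (by positivity)).1 hle).trans (div_le_self hx hn₁)
  linarith

lemma exists_abs_countDvdFloor_sub_le (hθ : 1 / 3 < θ) (hθ' : θ ≤ 2) :
    ∃ C : ℝ, 0 ≤ C ∧ ∀ (x : ℝ) (d : ℕ), 1 ≤ x → 0 < d →
      |countDvdFloor x d - x / d * realHarmonic (1 / d)| ≤ C * (x / d) ^ θ := by
  obtain ⟨C, hC, hfloor⟩ := exists_abs_sum_floor_sub_floor_sub_le hθ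
  refine ⟨C + 2, by positivity, fun x d hx hd => ?_⟩
  have hx₀ : 0 < x := by positivity
  have hd₁ : (1 : ℝ) ≤ d := by exact_mod_cast hd
  rcases le_or_gt (d : ℝ) x with hdx | hdx
  · rw [countDvdFloor_eq_sum]
    refine (hfloor (x / d) (1 / d) ⌊x⌋₊ ((one_le_div (by positivity)).2 hdx) (by positivity)
      ((div_le_one (by positivity)).2 hd₁) (Nat.floor_le_floor (div_le_self hx₀.le hd₁))).trans ?_
    gcongr
    linarith
  · rw [countDvdFloor_eq_zero hx₀.le hdx, Nat.cast_zero, zero_sub, abs_neg,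
      abs_of_nonneg (mul_nonneg (by positivity) (realHarmonic_nonneg (by positivity)))]
    calc x / d * realHarmonic (1 / d) ≤ x / d * (2 * (1 / d)) := by
          gcongr
          exact realHarmonic_le (by positivity)
      _ ≤ x / d * (2 * (x / d)) := by gcongr
      _ = 2 * (x / d) ^ (2 : ℝ) := by
          rw [Real.rpow_two]
          ring
      _ ≤ (C + 2) * (x / d) ^ θ := by
          have hpow := Real.rpow_le_rpow_of_exponent_ge (by positivity)
            ((div_le_one (by positivity)).2 hdx.le) hθ'
          gcongr
          linarith

lemma hasSum_inv_mul_add_one {d : ℕ} (hd : 0 < d) :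
    HasSum (fun l : ℕ+ => (((d * l : ℕ) : ℝ) * ((d * l : ℕ) + 1))⁻¹)
      (1 / d * realHarmonic (1 / d)) := by
  rw [← Equiv.pnatEquivNat.symm.hasSum_iff]
  refine ((summable_one_div_sub_one_div_add (α := 1 / d) (by positivity)).hasSum.mul_left
    (1 / (d : ℝ))).congr_fun fun l => ?_
  simp only [Function.comp_apply, Equiv.pnatEquivNat_symm_apply, Nat.succPNat_coe,
    Nat.succ_eq_add_one]
  push_cast
  field_simp
  ring

end DivisorCount

section DivisorSums

lemma hasSum_ite_dvd {M : Type*} [AddCommMonoid M] [TopologicalSpace M] (k : ℕ → M) {m : ℕ}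
    (hm : m ≠ 0) :
    HasSum (fun d : ℕ+ => if (d : ℕ) ∣ m then k d else 0) (∑ d ∈ m.divisors, k d) := by
  have hsupp : ∀ d ∉ Set.range ((↑) : ℕ+ → ℕ), (if d ∈ m.divisors then k d else 0) = 0 :=
    fun d hd => if_neg fun h => hd ⟨⟨d, Nat.pos_of_mem_divisors h⟩, rfl⟩
  have hsum : HasSum (fun d => if d ∈ m.divisors then k d else 0) (∑ d ∈ m.divisors, k d) := by
    rw [← sum_congr rfl fun d hd => if_pos hd]
    exact hasSum_sum_of_ne_finset_zero fun d hd => if_neg hd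
  simpa [Function.comp_def, Nat.mem_divisors, hm] using
    (PNat.coe_injective.hasSum_iff hsupp).2 hsum

lemma inv_smul_sum_divisors {M : Type*} [AddCommGroup M] [Module ℝ M] (g : ℕ → M) (m : ℕ) :
    (m : ℝ)⁻¹ • ∑ d ∈ m.divisors, (d : ℝ) • g (m / d) = ∑ d ∈ m.divisors, (d : ℝ)⁻¹ • g d := by
  rw [← Nat.sum_div_divisors m fun d => (d : ℝ)⁻¹ • g d, smul_sum]
  refine sum_congr rfl fun d hd => ?_
  have hd₀ : (d : ℝ) ≠ 0 := by exact_mod_cast (Nat.pos_of_mem_divisors hd).ne'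
  rw [smul_smul, Nat.cast_div (Nat.dvd_of_mem_divisors hd) hd₀, inv_div, inv_mul_eq_div]

variable {E : Type*} [NormedAddCommGroup E] {k : ℕ → E} {C θ η x : ℝ}

lemma isBigO_sum_floor_div {h : ℕ → E} (hθ : 1 < θ)
    (hh : ∀ n : ℕ, 1 ≤ n → ‖h n‖ ≤ C * (n : ℝ) ^ θ) :
    (fun x : ℝ => ∑ n ∈ Icc 1 ⌊x⌋₊, h ⌊x / n⌋₊) =O[atTop] fun x : ℝ => x ^ θ := by
  have hC : 0 ≤ C := by simpa using (norm_nonneg _).trans (hh 1 le_rfl)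
  have hconv : Summable fun n : ℕ => (n : ℝ) ^ (-θ) := Real.summable_nat_rpow.2 (by linarith)
  refine Asymptotics.IsBigO.of_bound (C * ∑' n : ℕ, (n : ℝ) ^ (-θ)) ?_
  filter_upwards [eventually_ge_atTop 1] with x hx
  have hx₀ : 0 < x := by positivity
  rw [Real.norm_of_nonneg (by positivity : 0 ≤ x ^ θ)]
  calc ‖∑ n ∈ Icc 1 ⌊x⌋₊, h ⌊x / n⌋₊‖ ≤ ∑ n ∈ Icc 1 ⌊x⌋₊, C * x ^ θ * (n : ℝ) ^ (-θ) := by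
        refine norm_sum_le_of_le _ fun n hn => ?_
        calc ‖h ⌊x / n⌋₊‖ ≤ C * (⌊x / n⌋₊ : ℝ) ^ θ :=
              hh _ (Nat.one_le_iff_ne_zero.2 (floor_div_ne_zero_of_mem_Icc_floor hn))
          _ ≤ C * (x / n) ^ θ := by
              gcongr
              exact Nat.floor_le (by positivity)
          _ = C * x ^ θ * (n : ℝ) ^ (-θ) := by
              rw [Real.div_rpow hx₀.le n.cast_nonneg, Real.rpow_neg n.cast_nonneg]
              ring
    _ ≤ C * x ^ θ * ∑' n : ℕ, (n : ℝ) ^ (-θ) := by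
        rw [← mul_sum]
        gcongr
        exact hconv.sum_le_tsum _ fun n _ => by positivity
    _ = C * (∑' n : ℕ, (n : ℝ) ^ (-θ)) * x ^ θ := by ring

lemma norm_sum_divisors_le (hθ : 1 ≤ θ) (hk : ∀ n : ℕ, 1 ≤ n → ‖k n‖ ≤ C * (n : ℝ) ^ (θ - 1))
    {m : ℕ} (hm : 1 ≤ m) : ‖∑ d ∈ m.divisors, k d‖ ≤ C * (m : ℝ) ^ θ := by
  have hC : 0 ≤ C := by simpa using (norm_nonneg _).trans (hk 1 le_rfl)
  have hm' : (0 : ℝ) < m := by exact_mod_cast hm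
  calc ‖∑ d ∈ m.divisors, k d‖ ≤ ∑ _d ∈ m.divisors, C * (m : ℝ) ^ (θ - 1) := by
        refine norm_sum_le_of_le _ fun d hd => (hk d (Nat.pos_of_mem_divisors hd)).trans ?_
        gcongr
        exact Nat.divisor_le hd
    _ = #m.divisors * (C * (m : ℝ) ^ (θ - 1)) := by rw [sum_const, nsmul_eq_mul]
    _ ≤ m * (C * (m : ℝ) ^ (θ - 1)) := by
        gcongr
        exact Nat.card_divisors_le_self m
    _ = C * (m : ℝ) ^ θ := by
        rw [Real.rpow_sub_one hm'.ne']
        field_simp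

variable [NormedSpace ℝ E]

lemma hasSum_countDvdFloor_smul (k : ℕ → E) (x : ℝ) :
    HasSum (fun d : ℕ+ => (countDvdFloor x d : ℝ) • k d)
      (∑ n ∈ Icc 1 ⌊x⌋₊, ∑ d ∈ ⌊x / n⌋₊.divisors, k d) := by
  refine (hasSum_sum fun n hn =>
    hasSum_ite_dvd k (floor_div_ne_zero_of_mem_Icc_floor hn)).congr_fun fun d => ?_
  rw [← sum_filter, sum_const, countDvdFloor, Nat.cast_smul_eq_nsmul]

lemma hasSum_smul_sum_divisors [CompleteSpace E] {a : ℕ → ℝ} {b : ℕ+ → ℝ}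
    (ha : ∀ d : ℕ+, HasSum (fun l : ℕ+ => a (d * l)) (b d))
    (h : Summable fun p : ℕ+ × ℕ+ => a (p.1 * p.2) • k p.1) :
    HasSum (fun d : ℕ+ => b d • k d) (∑' m : ℕ+, a m • ∑ d ∈ (m : ℕ).divisors, k d) := by
  have hfibers := h.hasSum.prod_fiberwise fun d => (ha d).smul_const (k d)
  convert hfibers using 1
  rw [← sigmaAntidiagonalEquivProd.tsum_eq,
    Summable.tsum_sigma (by exact sigmaAntidiagonalEquivProd.summable_iff.2 h)]
  refine tsum_congr fun m => ?_
  rw [tsum_fintype, ← Nat.sum_divisorsAntidiagonal (fun d _ => k d), smul_sum, ← sum_coe_sort]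
  refine sum_congr rfl fun p _ => ?_
  exact congrArg (fun j => a j • k p.1.1) (Nat.mem_divisorsAntidiagonal.1 p.2).1.symm

lemma summable_pnat_rpow {s : ℝ} (hs : s < -1) : Summable fun d : ℕ+ => ((d : ℕ) : ℝ) ^ s :=
  summable_pnat_iff_summable_nat (f := fun d : ℕ => (d : ℝ) ^ s) |>.2 (Real.summable_nat_rpow.2 hs)

lemma summable_inv_mul_add_one_smul [CompleteSpace E] (hη : η < 2)
    (hk : ∀ n : ℕ, 1 ≤ n → ‖k n‖ ≤ C * (n : ℝ) ^ (η - 1)) :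
    Summable fun p : ℕ+ × ℕ+ =>
      (((p.1 * p.2 : ℕ) : ℝ) * ((p.1 * p.2 : ℕ) + 1))⁻¹ • k p.1 := by
  refine Summable.of_norm_bounded (((summable_pnat_rpow (s := η - 3) (by linarith)).mul_of_nonneg
    (summable_pnat_rpow (s := -2) (by norm_num)) (fun _ => by positivity)
    (fun _ => by positivity)).mul_left C) ?_
  rintro ⟨d, l⟩
  have hd : (0 : ℝ) < (d : ℕ) := by exact_mod_cast d.pos
  have hl : (0 : ℝ) < (l : ℕ) := by exact_mod_cast l.pos
  have hweight : (((d * l : ℕ) : ℝ) * ((d * l : ℕ) + 1))⁻¹ ≤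
      ((d : ℕ) : ℝ) ^ (-2 : ℝ) * ((l : ℕ) : ℝ) ^ (-2 : ℝ) := by
    rw [← Real.mul_rpow hd.le hl.le, Real.rpow_neg (by positivity), Real.rpow_two, sq]
    push_cast
    gcongr
    linarith
  rw [norm_smul, Real.norm_of_nonneg (by positivity)]
  calc (((d * l : ℕ) : ℝ) * ((d * l : ℕ) + 1))⁻¹ * ‖k d‖
      ≤ ((d : ℕ) : ℝ) ^ (-2 : ℝ) * ((l : ℕ) : ℝ) ^ (-2 : ℝ) * (C * ((d : ℕ) : ℝ) ^ (η - 1)) := by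
        gcongr
        exact hk d d.pos
    _ = C * (((d : ℕ) : ℝ) ^ (-2 + (η - 1)) * ((l : ℕ) : ℝ) ^ (-2 : ℝ)) := by
        rw [Real.rpow_add hd]
        ring
    _ = C * (((d : ℕ) : ℝ) ^ (η - 3) * ((l : ℕ) : ℝ) ^ (-2 : ℝ)) := by ring_nf

lemma isBigO_sum_sum_divisors_of_le_two [CompleteSpace E] (hθ : 1 / 3 < θ) (hθ' : θ ≤ 2)
    (hη : η < θ) (hk : ∀ n : ℕ, 1 ≤ n → ‖k n‖ ≤ C * (n : ℝ) ^ (η - 1)) :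
    (fun x : ℝ => (∑ n ∈ Icc 1 ⌊x⌋₊, ∑ d ∈ ⌊x / n⌋₊.divisors, k d) -
        x • ∑' m : ℕ+, (((m : ℕ) : ℝ) * ((m : ℕ) + 1))⁻¹ • ∑ d ∈ (m : ℕ).divisors, k d)
      =O[atTop] fun x : ℝ => x ^ θ := by
  obtain ⟨K, hK, hcount⟩ := exists_abs_countDvdFloor_sub_le hθ hθ'
  have hmain := hasSum_smul_sum_divisors (k := k) (a := fun m => ((m : ℝ) * (m + 1))⁻¹)
    (fun d => hasSum_inv_mul_add_one d.pos)
    (summable_inv_mul_add_one_smul (hη.trans_le hθ') hk)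
  have hconv := summable_pnat_rpow (s := η - 1 - θ) (by linarith)
  refine Asymptotics.IsBigO.of_bound (C * K * ∑' d : ℕ+, ((d : ℕ) : ℝ) ^ (η - 1 - θ)) ?_
  filter_upwards [eventually_ge_atTop 1] with x hx
  have hx₀ : 0 < x := by positivity
  rw [← ((hasSum_countDvdFloor_smul k x).sub (hmain.const_smul x)).tsum_eq,
    Real.norm_of_nonneg (by positivity : 0 ≤ x ^ θ)]
  refine tsum_of_norm_bounded ((hconv.hasSum.mul_left (C * K)).mul_right (x ^ θ)) fun d => ?_
  have hd : (0 : ℝ) < (d : ℕ) := by exact_mod_cast d.pos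
  calc _ = |(countDvdFloor x d : ℝ) - x / (d : ℕ) * realHarmonic (1 / (d : ℕ))| * ‖k d‖ := by
        rw [smul_smul, ← sub_smul, norm_smul, Real.norm_eq_abs, ← mul_assoc, mul_one_div]
    _ ≤ K * (x / (d : ℕ)) ^ θ * (C * ((d : ℕ) : ℝ) ^ (η - 1)) := by
        gcongr
        · exact hcount x d hx d.pos
        · exact hk d d.pos
    _ = C * K * ((d : ℕ) : ℝ) ^ (η - 1 - θ) * x ^ θ := by
        rw [Real.div_rpow hx₀.le hd.le, Real.rpow_sub hd (η - 1) θ]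
        ring

lemma isBigO_sum_sum_divisors [CompleteSpace E] (hθ : 1 / 3 < θ) (hη : η < θ)
    (hk : ∀ n : ℕ, 1 ≤ n → ‖k n‖ ≤ C * (n : ℝ) ^ (η - 1)) :
    (fun x : ℝ => (∑ n ∈ Icc 1 ⌊x⌋₊, ∑ d ∈ ⌊x / n⌋₊.divisors, k d) -
        x • ∑' m : ℕ+, (((m : ℕ) : ℝ) * ((m : ℕ) + 1))⁻¹ • ∑ d ∈ (m : ℕ).divisors, k d)
      =O[atTop] fun x : ℝ => x ^ θ := by
  rcases le_or_gt θ 2 with hθ' | hθ'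
  · exact isBigO_sum_sum_divisors_of_le_two hθ hθ' hη hk
  have hC : 0 ≤ C := by simpa using (norm_nonneg _).trans (hk 1 le_rfl)
  have hk' : ∀ n : ℕ, 1 ≤ n → ‖k n‖ ≤ C * (n : ℝ) ^ (θ - 1) := by
    intro n hn
    have hn' : (1 : ℝ) ≤ n := by exact_mod_cast hn
    refine (hk n hn).trans ?_
    gcongr
  refine (isBigO_sum_floor_div (by linarith) fun m =>
    norm_sum_divisors_le (by linarith) hk').sub ?_
  have hlinear : (fun x : ℝ => x) =O[atTop] fun x : ℝ => x ^ θ := by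
    refine Asymptotics.IsBigO.of_bound 1 ?_
    filter_upwards [eventually_ge_atTop 1] with x hx
    rw [Real.norm_of_nonneg (by positivity), Real.norm_of_nonneg (by positivity), one_mul]
    exact Real.self_le_rpow_of_one_le hx (by linarith)
  simpa using hlinear.smul (Asymptotics.isBigO_const_const
    (∑' m : ℕ+, (((m : ℕ) : ℝ) * ((m : ℕ) + 1))⁻¹ • ∑ d ∈ (m : ℕ).divisors, k d)
    (one_ne_zero (α := ℝ)) atTop)

end DivisorSums

theorem sum_f_floor_div_asymptotic_eps_general {E : Type*} [NormedAddCommGroup E]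
    [NormedSpace ℝ E] [CompleteSpace E] {θ η : ℝ} (hθ : 1 / 3 < θ) (hη : η < θ) {f g : ℕ → E}
    (hf : ∀ n : ℕ, 1 ≤ n → f n = ∑ d ∈ n.divisors, (d : ℝ) • g (n / d))
    (hg : ∃ C : ℝ, ∀ n : ℕ, 1 ≤ n → ‖g n‖ ≤ C * (n : ℝ) ^ η) :
    (fun x : ℝ => (∑ n ∈ Icc 1 ⌊x⌋₊, (⌊x / n⌋₊ : ℝ)⁻¹ • f ⌊x / n⌋₊) -
        x • ∑' m : ℕ, ((m : ℝ) ^ 2 * (m + 1))⁻¹ • f m)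
      =O[atTop] fun x : ℝ => x ^ θ := by
  obtain ⟨C, hg⟩ := hg
  have hk : ∀ n : ℕ, 1 ≤ n → ‖(n : ℝ)⁻¹ • g n‖ ≤ C * (n : ℝ) ^ (η - 1) := by
    intro n hn
    have hn₀ : (0 : ℝ) < n := by exact_mod_cast hn
    rw [norm_smul, norm_inv, Real.norm_natCast, Real.rpow_sub_one hn₀.ne', inv_mul_eq_div,
      ← mul_div_assoc]
    gcongr
    exact hg n hn
  have hfk (m : ℕ) : (m : ℝ)⁻¹ • f m = ∑ d ∈ m.divisors, (d : ℝ)⁻¹ • g d := by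
    rcases Nat.eq_zero_or_pos m with rfl | hm
    · simp
    · rw [hf m hm, inv_smul_sum_divisors]
  have hseries : ∑' m : ℕ, ((m : ℝ) ^ 2 * (m + 1))⁻¹ • f m =
      ∑' m : ℕ+, (((m : ℕ) : ℝ) * ((m : ℕ) + 1))⁻¹ • ∑ d ∈ (m : ℕ).divisors, (d : ℝ)⁻¹ • g d := by
    rw [← tsum_pnat_eq_tsum_of_eq_zero (by simp)]
    refine tsum_congr fun m => ?_
    rw [← hfk, smul_smul, ← mul_inv, mul_right_comm, ← sq]
  simp_rw [hseries, hfk]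
  exact isBigO_sum_sum_divisors hθ hη hk

/-- If `f = id ∗ g` with `g(n) = O_ε(n^ε)`, then
`∑_{n ≤ x} f(⌊x/n⌋)/⌊x/n⌋ = x ∑_{m ≥ 1} f(m)/(m²(m+1)) + O(x^{1/3+ε})`. -/
theorem sum_f_floor_div_asymptotic_eps (ε : ℝ) (hε : 0 < ε) (f g : ℕ → ℝ)
    (hf : ∀ n : ℕ, 1 ≤ n → f n = ∑ d ∈ n.divisors, (d : ℝ) * g (n / d))
    (hg : ∃ C : ℝ, ∀ n : ℕ, 1 ≤ n → |g n| ≤ C * (n : ℝ) ^ ε) :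
    (fun x : ℝ =>
        (∑ n ∈ Finset.Icc 1 ⌊x⌋₊, f ⌊x / (n : ℝ)⌋₊ / (⌊x / (n : ℝ)⌋₊ : ℝ)) -
        x * ∑' m : ℕ, f m / (m ^ 2 * (m + 1)))
    =O[atTop] fun x : ℝ => x ^ ((1 : ℝ) / 3 + ε) := by
  simpa only [smul_eq_mul, inv_mul_eq_div] using
    sum_f_floor_div_asymptotic_eps_general (by linarith) (by linarith : ε < 1 / 3 + ε) hf hg
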